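/- Completeness of the sequent calculus of BD⊃,F: for all sets Γ, Δ of formulas of BD⊃,F, if Γ ⊨ Δ then Γ ⊢ Δ. -/

import Mathlib

/-!
The interpretation of `=` need not be the identity on the domain: it only has to be designated on
the diagonal. Hence a term model needs no quotient, and completeness uses neither the replacement
rule for `=` nor cut.

* Finite sequents. A finite unprovable sequent is extended step by step, along the rules read
  bottom-up, to a chain of finite unprovable sequents; the eigenvariables are available since
  each stage is finite. The instances of `∀` on the left and `∃` on the right run through the terms
  built from the function symbols of the original sequent. There are only countably many of those,
  whatever the signature, so a chain of length `ω` treats every formula with every term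
  (`exists_hintikka`). Its union is saturated under the reductions `red`, and the terms over those
  function symbols form a structure in which every formula on the left is designated and no formula
  on the right is (`truth`), so the sequent is refuted (`countermodel`).
* Arbitrary sets. If no finite part of `Γ ⇒ Δ` is provable, each one has a countermodel. The
  product of these, with predicates evaluated along an ultrafilter on the finite parts, refutes
  `Γ ⇒ Δ` by a version of Łoś's theorem (`los`). Again no quotient is necessary.
-/


namespace BD

inductive V4 : Type
  | t | b | n | f
deriving DecidableEq

def Desig : Set V4 := {V4.t, V4.b}

def tnot : V4 → V4
  | .t => .f
  | .f => .t
  | .b => .b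
  | .n => .n

def tand : V4 → V4 → V4
  | .f, _ => .f
  | _, .f => .f
  | .t, a => a
  | a, .t => a
  | .b, .b => .b
  | .n, .n => .n
  | .b, .n => .f
  | .n, .b => .f

def tor : V4 → V4 → V4
  | .t, _ => .t
  | _, .t => .t
  | .f, a => a
  | a, .f => a
  | .b, .b => .b
  | .n, .n => .n
  | .b, .n => .t
  | .n, .b => .t

def timp : V4 → V4 → V4
  | .t, a => a
  | .b, a => a
  | .n, _ => .t
  | .f, _ => .t

open Classical in
noncomputable def tInf (V : Set V4) : V4 :=
  if V4.f ∈ V ∨ (V4.b ∈ V ∧ V4.n ∈ V) then .f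
  else if V4.b ∈ V then .b
  else if V4.n ∈ V then .n
  else .t

open Classical in
noncomputable def tSup (V : Set V4) : V4 :=
  if V4.t ∈ V ∨ (V4.b ∈ V ∧ V4.n ∈ V) then .t
  else if V4.b ∈ V then .b
  else if V4.n ∈ V then .n
  else .f

/-- A first-order signature with a distinguished binary equality predicate. -/
structure Signature where
  Func : ℕ → Type
  Pred : ℕ → Type
  eq : Pred 2

/-- Terms over a signature, with natural numbers as variables. -/
inductive Term (σ : Signature) : Type
  | var : ℕ → Term σ
  | func : {k : ℕ} → σ.Func k → (Fin k → Term σ) → Term σ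

/-- Formulas of BD⊃,F over a signature. -/
inductive Formula (σ : Signature) : Type
  | pred : {k : ℕ} → σ.Pred k → (Fin k → Term σ) → Formula σ
  | fls : Formula σ
  | neg : Formula σ → Formula σ
  | conj : Formula σ → Formula σ → Formula σ
  | disj : Formula σ → Formula σ → Formula σ
  | imp : Formula σ → Formula σ → Formula σ
  | all : ℕ → Formula σ → Formula σ
  | ex : ℕ → Formula σ → Formula σ

variable {σ : Signature}

/-- A structure for the language: nonempty domain, interpretations of function and
predicate symbols, with equality designated on the diagonal. -/
structure Struc (σ : Signature) where
  U : Type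
  uNonempty : Nonempty U
  funcI : {k : ℕ} → σ.Func k → (Fin k → U) → U
  predI : {k : ℕ} → σ.Pred k → (Fin k → U) → V4
  eqDesig : ∀ d : U, predI σ.eq ![d, d] ∈ Desig

/-- Value of a term in a structure under an assignment. -/
def Term.val (A : Struc σ) (α : ℕ → A.U) : Term σ → A.U
  | .var x => α x
  | .func g ts => A.funcI g (fun i => (ts i).val A α)

/-- Truth value of a formula in a structure under an assignment. -/
noncomputable def Formula.val (A : Struc σ) : (ℕ → A.U) → Formula σ → V4
  | α, .pred P ts => A.predI P (fun i => (ts i).val A α)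
  | _, .fls => .f
  | α, .neg B => tnot (B.val A α)
  | α, .conj B C => tand (B.val A α) (C.val A α)
  | α, .disj B C => tor (B.val A α) (C.val A α)
  | α, .imp B C => timp (B.val A α) (C.val A α)
  | α, .all x B => tInf (Set.range fun d : A.U => B.val A (Function.update α x d))
  | α, .ex x B => tSup (Set.range fun d : A.U => B.val A (Function.update α x d))

/-- Logical consequence in BD⊃,F. -/
def Conseq (Γ Δ : Set (Formula σ)) : Prop :=
  ∀ (A : Struc σ) (α : ℕ → A.U),
    (∀ B ∈ Γ, B.val A α ∈ Desig) → ∃ C ∈ Δ, C.val A α ∈ Desig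

/-- Logical consequence restricted to structures whose predicate (and proposition)
symbols take values in `S`. -/
def ConseqOn (S : Set V4) (Γ Δ : Set (Formula σ)) : Prop :=
  ∀ A : Struc σ, (∀ (k : ℕ) (P : σ.Pred k) (ds : Fin k → A.U), A.predI P ds ∈ S) →
    ∀ α : ℕ → A.U,
      (∀ B ∈ Γ, B.val A α ∈ Desig) → ∃ C ∈ Δ, C.val A α ∈ Desig

/-- The (finitely many) free variables of a term. -/
def Term.fv : Term σ → Finset ℕ
  | .var x => {x}
  | .func _ ts => Finset.univ.biUnion fun i => (ts i).fv

/-- The free variables of a formula. -/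
def Formula.fv : Formula σ → Finset ℕ
  | .pred _ ts => Finset.univ.biUnion fun i => (ts i).fv
  | .fls => ∅
  | .neg B => B.fv
  | .conj B C => B.fv ∪ C.fv
  | .disj B C => B.fv ∪ C.fv
  | .imp B C => B.fv ∪ C.fv
  | .all x B => B.fv.erase x
  | .ex x B => B.fv.erase x

/-- Logical equivalence in BD⊃,F. -/
def LogEquiv (A₁ A₂ : Formula σ) : Prop :=
  ∀ (A : Struc σ) (α : ℕ → A.U), A₁.val A α = A₂.val A α


variable {σ : Signature}

/-- A variable not belonging to the given finite set. -/
def freshVar (s : Finset ℕ) : ℕ := (s.sup id) + 1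

/-- Substitution of terms for variables in a term. -/
def Term.subst (θ : ℕ → Term σ) : Term σ → Term σ
  | .var x => θ x
  | .func g ts => .func g (fun i => (ts i).subst θ)

/-- Capture-avoiding simultaneous substitution in a formula: bound variables are
renamed when they would capture a free variable of a substituted term. -/
def Formula.subst (θ : ℕ → Term σ) : Formula σ → Formula σ
  | .pred P ts => .pred P (fun i => (ts i).subst θ)
  | .fls => .fls
  | .neg B => .neg (B.subst θ)
  | .conj B C => .conj (B.subst θ) (C.subst θ)
  | .disj B C => .disj (B.subst θ) (C.subst θ)
  | .imp B C => .imp (B.subst θ) (C.subst θ)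
  | .all y B =>
      let captured := (B.fv.erase y).biUnion fun z => (θ z).fv
      let y' := if y ∈ captured then freshVar (captured ∪ B.fv) else y
      .all y' (B.subst (Function.update θ y (.var y')))
  | .ex y B =>
      let captured := (B.fv.erase y).biUnion fun z => (θ z).fv
      let y' := if y ∈ captured then freshVar (captured ∪ B.fv) else y
      .ex y' (B.subst (Function.update θ y (.var y')))

/-- `A.subst1 x t` is the capture-avoiding substitution `A[x := t]`. -/
def Formula.subst1 (A : Formula σ) (x : ℕ) (t : Term σ) : Formula σ :=
  A.subst (Function.update Term.var x t)

/-- Atomic formulas. -/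
def Formula.IsAtomic : Formula σ → Prop
  | .pred _ _ => True
  | .fls => True
  | _ => False

/-- A literal is an atomic formula or the negation of an atomic formula. -/
def Formula.IsLiteral (A : Formula σ) : Prop :=
  A.IsAtomic ∨ ∃ B : Formula σ, B.IsAtomic ∧ A = .neg B

/-- The equation `t₁ = t₂` as a formula. -/
def eqF (t₁ t₂ : Term σ) : Formula σ := .pred σ.eq ![t₁, t₂]

/-- `y` is not free in any formula of `Γ`. -/
def NotFreeIn (y : ℕ) (Γ : Set (Formula σ)) : Prop := ∀ B ∈ Γ, y ∉ B.fv

/-- Provability of sequents in the sequent calculus of BD⊃,F.  Sequents are written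
with sets; `Derives` below restricts attention to finite sequents. -/
inductive Prov (σ : Signature) : Set (Formula σ) → Set (Formula σ) → Prop where
  | id (A : Formula σ) (Γ Δ : Set (Formula σ)) :
      A.IsLiteral → Prov σ (insert A Γ) (insert A Δ)
  | cut (A : Formula σ) (Γ Δ Γ' Δ' : Set (Formula σ)) :
      Prov σ Γ (insert A Δ) → Prov σ (insert A Γ') Δ' → Prov σ (Γ ∪ Γ') (Δ ∪ Δ')
  | fls_l (Γ Δ : Set (Formula σ)) : Prov σ (insert .fls Γ) Δ
  | and_l (A₁ A₂ : Formula σ) (Γ Δ : Set (Formula σ)) :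
      Prov σ (insert A₁ (insert A₂ Γ)) Δ → Prov σ (insert (.conj A₁ A₂) Γ) Δ
  | and_r (A₁ A₂ : Formula σ) (Γ Δ : Set (Formula σ)) :
      Prov σ Γ (insert A₁ Δ) → Prov σ Γ (insert A₂ Δ) →
      Prov σ Γ (insert (.conj A₁ A₂) Δ)
  | or_l (A₁ A₂ : Formula σ) (Γ Δ : Set (Formula σ)) :
      Prov σ (insert A₁ Γ) Δ → Prov σ (insert A₂ Γ) Δ →
      Prov σ (insert (.disj A₁ A₂) Γ) Δ
  | or_r (A₁ A₂ : Formula σ) (Γ Δ : Set (Formula σ)) :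
      Prov σ Γ (insert A₁ (insert A₂ Δ)) → Prov σ Γ (insert (.disj A₁ A₂) Δ)
  | imp_l (A₁ A₂ : Formula σ) (Γ Δ : Set (Formula σ)) :
      Prov σ Γ (insert A₁ Δ) → Prov σ (insert A₂ Γ) Δ →
      Prov σ (insert (.imp A₁ A₂) Γ) Δ
  | imp_r (A₁ A₂ : Formula σ) (Γ Δ : Set (Formula σ)) :
      Prov σ (insert A₁ Γ) (insert A₂ Δ) → Prov σ Γ (insert (.imp A₁ A₂) Δ)
  | all_l (x : ℕ) (t : Term σ) (A : Formula σ) (Γ Δ : Set (Formula σ)) :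
      Prov σ (insert (A.subst1 x t) Γ) Δ → Prov σ (insert (.all x A) Γ) Δ
  | all_r (x y : ℕ) (A : Formula σ) (Γ Δ : Set (Formula σ)) :
      NotFreeIn y Γ → NotFreeIn y Δ → (x ≠ y → y ∉ A.fv) →
      Prov σ Γ (insert (A.subst1 x (.var y)) Δ) → Prov σ Γ (insert (.all x A) Δ)
  | ex_l (x y : ℕ) (A : Formula σ) (Γ Δ : Set (Formula σ)) :
      NotFreeIn y Γ → NotFreeIn y Δ → (x ≠ y → y ∉ A.fv) →
      Prov σ (insert (A.subst1 x (.var y)) Γ) Δ → Prov σ (insert (.ex x A) Γ) Δ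
  | ex_r (x : ℕ) (t : Term σ) (A : Formula σ) (Γ Δ : Set (Formula σ)) :
      Prov σ Γ (insert (A.subst1 x t) Δ) → Prov σ Γ (insert (.ex x A) Δ)
  | negfls_r (Γ Δ : Set (Formula σ)) : Prov σ Γ (insert (.neg .fls) Δ)
  | negneg_l (A : Formula σ) (Γ Δ : Set (Formula σ)) :
      Prov σ (insert A Γ) Δ → Prov σ (insert (.neg (.neg A)) Γ) Δ
  | negneg_r (A : Formula σ) (Γ Δ : Set (Formula σ)) :
      Prov σ Γ (insert A Δ) → Prov σ Γ (insert (.neg (.neg A)) Δ)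
  | negand_l (A₁ A₂ : Formula σ) (Γ Δ : Set (Formula σ)) :
      Prov σ (insert (.neg A₁) Γ) Δ → Prov σ (insert (.neg A₂) Γ) Δ →
      Prov σ (insert (.neg (.conj A₁ A₂)) Γ) Δ
  | negand_r (A₁ A₂ : Formula σ) (Γ Δ : Set (Formula σ)) :
      Prov σ Γ (insert (.neg A₁) (insert (.neg A₂) Δ)) →
      Prov σ Γ (insert (.neg (.conj A₁ A₂)) Δ)
  | negor_l (A₁ A₂ : Formula σ) (Γ Δ : Set (Formula σ)) :
      Prov σ (insert (.neg A₁) (insert (.neg A₂) Γ)) Δ →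
      Prov σ (insert (.neg (.disj A₁ A₂)) Γ) Δ
  | negor_r (A₁ A₂ : Formula σ) (Γ Δ : Set (Formula σ)) :
      Prov σ Γ (insert (.neg A₁) Δ) → Prov σ Γ (insert (.neg A₂) Δ) →
      Prov σ Γ (insert (.neg (.disj A₁ A₂)) Δ)
  | negimp_l (A₁ A₂ : Formula σ) (Γ Δ : Set (Formula σ)) :
      Prov σ (insert A₁ (insert (.neg A₂) Γ)) Δ →
      Prov σ (insert (.neg (.imp A₁ A₂)) Γ) Δ
  | negimp_r (A₁ A₂ : Formula σ) (Γ Δ : Set (Formula σ)) :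
      Prov σ Γ (insert A₁ Δ) → Prov σ Γ (insert (.neg A₂) Δ) →
      Prov σ Γ (insert (.neg (.imp A₁ A₂)) Δ)
  | negall_l (x y : ℕ) (A : Formula σ) (Γ Δ : Set (Formula σ)) :
      NotFreeIn y Γ → NotFreeIn y Δ → (x ≠ y → y ∉ A.fv) →
      Prov σ (insert (.neg (A.subst1 x (.var y))) Γ) Δ →
      Prov σ (insert (.neg (.all x A)) Γ) Δ
  | negall_r (x : ℕ) (t : Term σ) (A : Formula σ) (Γ Δ : Set (Formula σ)) :
      Prov σ Γ (insert (.neg (A.subst1 x t)) Δ) →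
      Prov σ Γ (insert (.neg (.all x A)) Δ)
  | negex_l (x : ℕ) (t : Term σ) (A : Formula σ) (Γ Δ : Set (Formula σ)) :
      Prov σ (insert (.neg (A.subst1 x t)) Γ) Δ →
      Prov σ (insert (.neg (.ex x A)) Γ) Δ
  | negex_r (x y : ℕ) (A : Formula σ) (Γ Δ : Set (Formula σ)) :
      NotFreeIn y Γ → NotFreeIn y Δ → (x ≠ y → y ∉ A.fv) →
      Prov σ Γ (insert (.neg (A.subst1 x (.var y))) Δ) →
      Prov σ Γ (insert (.neg (.ex x A)) Δ)
  | eq_refl (t : Term σ) (Γ Δ : Set (Formula σ)) :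
      Prov σ (insert (eqF t t) Γ) Δ → Prov σ Γ Δ
  | eq_repl (x : ℕ) (t₁ t₂ : Term σ) (A : Formula σ) (Γ Δ : Set (Formula σ)) :
      A.IsLiteral → Prov σ (insert (A.subst1 x t₁) Γ) Δ →
      Prov σ (insert (eqF t₁ t₂) (insert (A.subst1 x t₂) Γ)) Δ

/-- `Γ ⊢ Δ`: some finite subsets `Γ' ⊆ Γ`, `Δ' ⊆ Δ` give a provable sequent. -/
def Derives (Γ Δ : Set (Formula σ)) : Prop :=
  ∃ Γ' Δ' : Set (Formula σ),
    Γ' ⊆ Γ ∧ Δ' ⊆ Δ ∧ Γ'.Finite ∧ Δ'.Finite ∧ Prov σ Γ' Δ'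

/-! ### Truth functions -/

theorem V4.forall {p : V4 → Prop} : (∀ v, p v) ↔ p .t ∧ p .b ∧ p .n ∧ p .f :=
  ⟨fun h => ⟨h _, h _, h _, h _⟩, fun h v => by cases v <;> tauto⟩

theorem V4.exists {p : V4 → Prop} : (∃ v, p v) ↔ p .t ∨ p .b ∨ p .n ∨ p .f := by
  constructor
  · rintro ⟨v, h⟩
    cases v <;> tauto
  · rintro (h | h | h | h) <;> exact ⟨_, h⟩

instance : Finite V4 :=
  Finite.of_surjective (fun i : Fin 4 => ![V4.t, V4.b, V4.n, V4.f] i) (by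
    simp only [Function.Surjective, V4.forall]
    exact ⟨⟨0, rfl⟩, ⟨1, rfl⟩, ⟨2, rfl⟩, ⟨3, rfl⟩⟩)

theorem tand_mem (u v : V4) : tand u v ∈ Desig ↔ u ∈ Desig ∧ v ∈ Desig := by
  cases u <;> cases v <;> simp [tand, Desig]

theorem tor_mem (u v : V4) : tor u v ∈ Desig ↔ u ∈ Desig ∨ v ∈ Desig := by
  cases u <;> cases v <;> simp [tor, Desig]

theorem timp_mem (u v : V4) : timp u v ∈ Desig ↔ (u ∈ Desig → v ∈ Desig) := by
  cases u <;> cases v <;> simp [timp, Desig]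

theorem tnot_tnot (a : V4) : tnot (tnot a) = a := by
  cases a <;> rfl

theorem tnot_tand_mem (u v : V4) :
    tnot (tand u v) ∈ Desig ↔ tnot u ∈ Desig ∨ tnot v ∈ Desig := by
  cases u <;> cases v <;> simp [tand, tnot, Desig]

theorem tnot_tor_mem (u v : V4) :
    tnot (tor u v) ∈ Desig ↔ tnot u ∈ Desig ∧ tnot v ∈ Desig := by
  cases u <;> cases v <;> simp [tor, tnot, Desig]

theorem tnot_timp_mem (u v : V4) :
    tnot (timp u v) ∈ Desig ↔ u ∈ Desig ∧ tnot v ∈ Desig := by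
  cases u <;> cases v <;> simp [timp, tnot, Desig]

theorem tInf_mem (V : Set V4) : tInf V ∈ Desig ↔ ∀ v ∈ V, v ∈ Desig := by
  simp only [V4.forall]
  by_cases h1 : V4.t ∈ V <;> by_cases h2 : V4.b ∈ V <;> by_cases h3 : V4.n ∈ V <;>
    by_cases h4 : V4.f ∈ V <;> simp [tInf, Desig, *]

theorem tSup_mem (V : Set V4) : tSup V ∈ Desig ↔ ∃ v ∈ V, v ∈ Desig := by
  simp only [V4.exists]
  by_cases h1 : V4.t ∈ V <;> by_cases h2 : V4.b ∈ V <;> by_cases h3 : V4.n ∈ V <;>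
    by_cases h4 : V4.f ∈ V <;> simp [tSup, Desig, *]

theorem tnot_tInf_mem (V : Set V4) : tnot (tInf V) ∈ Desig ↔ ∃ v ∈ V, tnot v ∈ Desig := by
  simp only [V4.exists]
  by_cases h1 : V4.t ∈ V <;> by_cases h2 : V4.b ∈ V <;> by_cases h3 : V4.n ∈ V <;>
    by_cases h4 : V4.f ∈ V <;> simp [tInf, tnot, Desig, *]

theorem tnot_tSup_mem (V : Set V4) : tnot (tSup V) ∈ Desig ↔ ∀ v ∈ V, tnot v ∈ Desig := by
  simp only [V4.forall]
  by_cases h1 : V4.t ∈ V <;> by_cases h2 : V4.b ∈ V <;> by_cases h3 : V4.n ∈ V <;>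
    by_cases h4 : V4.f ∈ V <;> simp [tSup, tnot, Desig, *]

/-! ### Substitution -/

theorem Term.val_congr (A : Struc σ) {α β : ℕ → A.U} (t : Term σ)
    (h : ∀ x ∈ t.fv, α x = β x) : t.val A α = t.val A β := by
  induction t with
  | var x => exact h x (by simp [Term.fv])
  | func g ts ih =>
    simp only [Term.val]
    congr 1
    funext i
    exact ih i fun x hx => h x (by simp only [Term.fv, Finset.mem_biUnion]; exact ⟨i, by simp, hx⟩)

theorem Formula.val_congr (A : Struc σ) (B : Formula σ) {α β : ℕ → A.U}
    (h : ∀ x ∈ B.fv, α x = β x) : B.val A α = B.val A β := by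
  induction B generalizing α β with
  | pred P ts =>
    simp only [Formula.val]
    congr 1
    funext i
    exact Term.val_congr A _ fun x hx =>
      h x (by simp only [Formula.fv, Finset.mem_biUnion]; exact ⟨i, by simp, hx⟩)
  | fls => rfl
  | neg B ih => simp only [Formula.val]; rw [ih h]
  | conj B C ihB ihC | disj B C ihB ihC | imp B C ihB ihC =>
    simp only [Formula.val]
    rw [ihB fun x hx => h x (by simp [Formula.fv, hx]),
      ihC fun x hx => h x (by simp [Formula.fv, hx])]
  | all x B ih | ex x B ih =>
    simp only [Formula.val]
    congr 2
    funext d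
    refine ih fun z hz => ?_
    by_cases hzx : z = x
    · subst hzx; simp
    · simp [hzx, h z (by simp [Formula.fv, hz, hzx])]

theorem Term.val_subst (A : Struc σ) (α : ℕ → A.U) (θ : ℕ → Term σ) (t : Term σ) :
    (t.subst θ).val A α = t.val A fun x => (θ x).val A α := by
  induction t with
  | var x => rfl
  | func g ts ih => simp only [Term.subst, Term.val, ih]

theorem freshVar_notMem (s : Finset ℕ) : freshVar s ∉ s := fun h => by
  have := Finset.le_sup (f := id) h
  simp only [freshVar, id] at this
  omega

/-- The bound variable chosen by `Formula.subst` captures nothing. -/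
theorem bound_notMem (s u : Finset ℕ) (y : ℕ) :
    (if y ∈ s then freshVar (s ∪ u) else y) ∉ s := by
  split_ifs with h
  · exact fun h' => freshVar_notMem (s ∪ u) (Finset.mem_union_left _ h')
  · exact h

/-- The quantifier step of the substitution lemma: moving the update at the new bound variable `y'`
through the substitution. -/
theorem val_update_subst (A : Struc σ) (B : Formula σ) (α : ℕ → A.U) (θ : ℕ → Term σ)
    (y y' : ℕ) (hy : y' ∉ (B.fv.erase y).biUnion fun z => (θ z).fv) (d : A.U) :
    (B.val A fun x => (Function.update θ y (.var y') x).val A (Function.update α y' d)) =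
      B.val A (Function.update (fun x => (θ x).val A α) y d) := by
  refine Formula.val_congr A B fun z hz => ?_
  by_cases hzy : z = y
  · subst hzy; simp [Term.val]
  · simp only [Function.update_of_ne hzy]
    refine Term.val_congr A _ fun w hw => ?_
    have : w ≠ y' := by
      rintro rfl
      exact hy (Finset.mem_biUnion.2 ⟨z, by simp [hz, hzy], hw⟩)
    simp [this]

theorem Formula.val_subst (A : Struc σ) (B : Formula σ) (α : ℕ → A.U) (θ : ℕ → Term σ) :
    (B.subst θ).val A α = B.val A fun x => (θ x).val A α := by
  induction B generalizing α θ with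
  | pred P ts => simp only [Formula.subst, Formula.val, Term.val_subst]
  | fls => rfl
  | neg B ih => simp only [Formula.subst, Formula.val, ih]
  | conj B C ihB ihC | disj B C ihB ihC | imp B C ihB ihC =>
    simp only [Formula.subst, Formula.val, ihB, ihC]
  | all y B ih | ex y B ih =>
    simp only [Formula.subst, Formula.val, ih]
    congr 2
    funext d
    exact val_update_subst A B α θ y _ (bound_notMem _ _ _) d

theorem Formula.val_subst1 (A : Struc σ) (B : Formula σ) (α : ℕ → A.U) (x : ℕ) (t : Term σ) :
    (B.subst1 x t).val A α = B.val A (Function.update α x (t.val A α)) := by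
  rw [Formula.subst1, Formula.val_subst]
  congr 1
  funext z
  by_cases hz : z = x
  · subst hz; simp
  · simp [hz, Term.val]

/-- The number of connectives and quantifiers, an induction measure invariant under substitution. -/
def Formula.size : Formula σ → ℕ
  | .pred _ _ => 0
  | .fls => 0
  | .neg B => B.size + 1
  | .conj B C => B.size + C.size + 1
  | .disj B C => B.size + C.size + 1
  | .imp B C => B.size + C.size + 1
  | .all _ B => B.size + 1
  | .ex _ B => B.size + 1

theorem Formula.size_subst (B : Formula σ) (θ : ℕ → Term σ) : (B.subst θ).size = B.size := by
  induction B generalizing θ <;> simp_all [Formula.subst, Formula.size]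

theorem Formula.size_subst1 (B : Formula σ) (x : ℕ) (t : Term σ) :
    (B.subst1 x t).size = B.size :=
  B.size_subst _

/-! ### Function symbols -/

/-- The function symbols, tagged with their arities, that occur in a term. -/
def Term.syms : Term σ → Set (Σ k, σ.Func k)
  | .var _ => ∅
  | .func g ts => insert ⟨_, g⟩ (⋃ i, (ts i).syms)

/-- The function symbols, tagged with their arities, that occur in a formula. -/
def Formula.syms : Formula σ → Set (Σ k, σ.Func k)
  | .pred _ ts => ⋃ i, (ts i).syms
  | .fls => ∅
  | .neg B => B.syms
  | .conj B C => B.syms ∪ C.syms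
  | .disj B C => B.syms ∪ C.syms
  | .imp B C => B.syms ∪ C.syms
  | .all _ B => B.syms
  | .ex _ B => B.syms

theorem Term.countable_syms (t : Term σ) : t.syms.Countable := by
  induction t with
  | var x => exact Set.countable_empty
  | func g ts ih => exact (Set.countable_iUnion ih).insert _

theorem Formula.countable_syms (B : Formula σ) : B.syms.Countable := by
  induction B with
  | pred P ts => exact Set.countable_iUnion fun i => (ts i).countable_syms
  | fls => exact Set.countable_empty
  | neg B ih | all x B ih | ex x B ih => exact ih
  | conj B C ihB ihC | disj B C ihB ihC | imp B C ihB ihC => exact ihB.union ihC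

variable {F : Set (Σ k, σ.Func k)}

theorem Term.syms_subst {θ : ℕ → Term σ} (hθ : ∀ x, (θ x).syms ⊆ F) (t : Term σ)
    (ht : t.syms ⊆ F) : (t.subst θ).syms ⊆ F := by
  induction t with
  | var x => exact hθ x
  | func g ts ih =>
    simp only [Term.subst, Term.syms, Set.insert_subset_iff, Set.iUnion_subset_iff] at ht ⊢
    exact ⟨ht.1, fun i => ih i (ht.2 i)⟩

theorem syms_update {θ : ℕ → Term σ} (hθ : ∀ x, (θ x).syms ⊆ F) (y : ℕ) {t : Term σ}
    (ht : t.syms ⊆ F) (x : ℕ) : (Function.update θ y t x).syms ⊆ F := by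
  by_cases h : x = y
  · subst h; simpa using ht
  · simpa [h] using hθ x

theorem Formula.syms_subst {θ : ℕ → Term σ} (hθ : ∀ x, (θ x).syms ⊆ F) (B : Formula σ)
    (hB : B.syms ⊆ F) : (B.subst θ).syms ⊆ F := by
  induction B generalizing θ with
  | pred P ts =>
    simp only [Formula.subst, Formula.syms, Set.iUnion_subset_iff] at hB ⊢
    exact fun i => Term.syms_subst hθ _ (hB i)
  | fls => exact hB
  | neg B ih => exact ih hθ hB
  | conj B C ihB ihC | disj B C ihB ihC | imp B C ihB ihC =>
    simp only [Formula.subst, Formula.syms, Set.union_subset_iff] at hB ⊢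
    exact ⟨ihB hθ hB.1, ihC hθ hB.2⟩
  | all y B ih | ex y B ih =>
    exact ih (syms_update hθ y (by simp [Term.syms])) hB

theorem Formula.syms_subst1 (B : Formula σ) (x : ℕ) {t : Term σ} (hB : B.syms ⊆ F)
    (ht : t.syms ⊆ F) : (B.subst1 x t).syms ⊆ F :=
  B.syms_subst (syms_update (fun _ => by simp [Term.syms]) x ht) hB

/-- The terms of depth at most `n` with function symbols in `F`. -/
def level (F : Set (Σ k, σ.Func k)) : ℕ → Set (Term σ)
  | 0 => Set.range Term.var
  | n + 1 => level F n ∪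
      ⋃ p ∈ F, (fun ts => Term.func p.2 ts) '' {ts : Fin p.1 → Term σ | ∀ i, ts i ∈ level F n}

theorem level_mono (F : Set (Σ k, σ.Func k)) : Monotone (level F) :=
  monotone_nat_of_le_succ fun _ => Set.subset_union_left

theorem countable_level (hF : F.Countable) (n : ℕ) : (level F n).Countable := by
  induction n with
  | zero => exact Set.countable_range _
  | succ n ih =>
    exact ih.union (hF.biUnion fun p _ => (Set.countable_pi fun _ => ih).image _)

theorem countable_terms (hF : F.Countable) : {t : Term σ | t.syms ⊆ F}.Countable := by
  refine (Set.countable_iUnion (countable_level hF)).mono fun t ht => ?_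
  simp only [Set.mem_iUnion]
  simp only [Set.mem_ofPred_eq] at ht
  induction t with
  | var x => exact ⟨0, x, rfl⟩
  | @func k g ts ih =>
    simp only [Term.syms, Set.insert_subset_iff, Set.iUnion_subset_iff] at ht
    choose m hm using fun i => ih i (ht.2 i)
    refine ⟨Finset.univ.sup m + 1, Or.inr ?_⟩
    simp only [Set.mem_iUnion]
    exact ⟨⟨k, g⟩, ht.1, ts, fun i =>
      level_mono F (Finset.le_sup (f := m) (Finset.mem_univ i)) (hm i), rfl⟩

/-! ### Reductions of signed formulas -/

/-- A set of signed formulas represents a sequent: `(true, A)` puts `A` on the left-hand side and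
`(false, A)` on the right-hand side. This is the provability of that sequent. -/
def Provable (s : Set (Bool × Formula σ)) : Prop :=
  Prov σ {A | (true, A) ∈ s} {A | (false, A) ∈ s}

/-- The rules read bottom-up: one list of signed formulas for each premise of the rule that
introduces the given signed formula. The term `t` is used for instantiation, and `y` is the
eigenvariable. A literal that no rule introduces has the single premise that adds nothing, and an
initial sequent has no premise. -/
def red (t : Term σ) (y : ℕ) : Bool → Formula σ → List (List (Bool × Formula σ))
  | _, .pred _ _ => [[]]
  | true, .fls => []
  | false, .fls => [[]]
  | true, .conj A B => [[(true, A), (true, B)]]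
  | false, .conj A B => [[(false, A)], [(false, B)]]
  | true, .disj A B => [[(true, A)], [(true, B)]]
  | false, .disj A B => [[(false, A), (false, B)]]
  | true, .imp A B => [[(false, A)], [(true, B)]]
  | false, .imp A B => [[(true, A), (false, B)]]
  | true, .all x A => [[(true, A.subst1 x t)]]
  | false, .all x A => [[(false, A.subst1 x (.var y))]]
  | true, .ex x A => [[(true, A.subst1 x (.var y))]]
  | false, .ex x A => [[(false, A.subst1 x t)]]
  | _, .neg (.pred _ _) => [[]]
  | true, .neg .fls => [[]]
  | false, .neg .fls => []
  | b, .neg (.neg A) => [[(b, A)]]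
  | true, .neg (.conj A B) => [[(true, .neg A)], [(true, .neg B)]]
  | false, .neg (.conj A B) => [[(false, .neg A), (false, .neg B)]]
  | true, .neg (.disj A B) => [[(true, .neg A), (true, .neg B)]]
  | false, .neg (.disj A B) => [[(false, .neg A)], [(false, .neg B)]]
  | true, .neg (.imp A B) => [[(true, A), (true, .neg B)]]
  | false, .neg (.imp A B) => [[(false, A)], [(false, .neg B)]]
  | true, .neg (.all x A) => [[(true, .neg (A.subst1 x (.var y)))]]
  | false, .neg (.all x A) => [[(false, .neg (A.subst1 x t))]]
  | true, .neg (.ex x A) => [[(true, .neg (A.subst1 x t))]]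
  | false, .neg (.ex x A) => [[(false, .neg (A.subst1 x (.var y)))]]

theorem left_insert_true (A : Formula σ) (s : Set (Bool × Formula σ)) :
    {B | (true, B) ∈ insert (true, A) s} = insert A {B | (true, B) ∈ s} := by
  ext; simp

theorem left_insert_false (A : Formula σ) (s : Set (Bool × Formula σ)) :
    {B | (true, B) ∈ insert (false, A) s} = {B | (true, B) ∈ s} := by
  ext; simp

theorem right_insert_true (A : Formula σ) (s : Set (Bool × Formula σ)) :
    {B | (false, B) ∈ insert (true, A) s} = {B | (false, B) ∈ s} := by
  ext; simp

theorem right_insert_false (A : Formula σ) (s : Set (Bool × Formula σ)) :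
    {B | (false, B) ∈ insert (false, A) s} = insert A {B | (false, B) ∈ s} := by
  ext; simp

/-- If all premises given by `red` for a signed formula of `s` are provable, then so is `s`. -/
theorem provable_of_red {s : Set (Bool × Formula σ)} {t : Term σ} {y : ℕ}
    (hy : ∀ p ∈ s, y ∉ p.2.fv) {b : Bool} {A : Formula σ} (hA : (b, A) ∈ s)
    (h : ∀ l ∈ red t y b A, Provable (l.foldr insert s)) : Provable s := by
  have hΓ : NotFreeIn y {B | (true, B) ∈ s} := fun B hB => hy _ hB
  have hΔ : NotFreeIn y {B | (false, B) ∈ s} := fun B hB => hy _ hB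
  have hbound : ∀ (x : ℕ) (B : Formula σ), y ∉ B.fv.erase x → x ≠ y → y ∉ B.fv :=
    fun x B h1 h2 h3 => h1 (Finset.mem_erase.2 ⟨h2.symm, h3⟩)
  have hyA := hy _ hA
  have hl : b = true → insert A {B | (true, B) ∈ s} = {B | (true, B) ∈ s} := by
    rintro rfl; exact Set.insert_eq_of_mem hA
  have hr : b = false → insert A {B | (false, B) ∈ s} = {B | (false, B) ∈ s} := by
    rintro rfl; exact Set.insert_eq_of_mem hA
  unfold Provable at h ⊢
  rcases b with _ | _
  · rw [← hr rfl]
    replace hr := hr rfl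
    clear hl
    rcases A with _ | _ | (_ | _ | _ | _ | _ | _ | _ | _) | _ | _ | _ | _ | _ <;>
      simp only [red, List.mem_cons, List.not_mem_nil, or_false, forall_eq, forall_eq_or_imp,
        List.foldr_cons, List.foldr_nil, left_insert_true, left_insert_false, right_insert_true,
        right_insert_false] at h
    · rw [hr]; exact h
    · rw [hr]; exact h
    · rw [hr]; exact h
    · exact Prov.negfls_r _ _
    · exact Prov.negneg_r _ _ _ h
    · exact Prov.negand_r _ _ _ _ h
    · exact Prov.negor_r _ _ _ _ h.1 h.2
    · exact Prov.negimp_r _ _ _ _ h.1 h.2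
    · exact Prov.negall_r _ _ _ _ _ h
    · exact Prov.negex_r _ _ _ _ _ hΓ hΔ (hbound _ _ hyA) h
    · exact Prov.and_r _ _ _ _ h.1 h.2
    · exact Prov.or_r _ _ _ _ h
    · exact Prov.imp_r _ _ _ _ h
    · exact Prov.all_r _ _ _ _ _ hΓ hΔ (hbound _ _ hyA) h
    · exact Prov.ex_r _ _ _ _ _ h
  · rw [← hl rfl]
    replace hl := hl rfl
    clear hr
    rcases A with _ | _ | (_ | _ | _ | _ | _ | _ | _ | _) | _ | _ | _ | _ | _ <;>
      simp only [red, List.mem_cons, List.not_mem_nil, or_false, forall_eq, forall_eq_or_imp,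
        List.foldr_cons, List.foldr_nil, left_insert_true, left_insert_false, right_insert_true,
        right_insert_false] at h
    · rw [hl]; exact h
    · exact Prov.fls_l _ _
    · rw [hl]; exact h
    · rw [hl]; exact h
    · exact Prov.negneg_l _ _ _ h
    · exact Prov.negand_l _ _ _ _ h.1 h.2
    · exact Prov.negor_l _ _ _ _ h
    · exact Prov.negimp_l _ _ _ _ h
    · exact Prov.negall_l _ _ _ _ _ hΓ hΔ (hbound _ _ hyA) h
    · exact Prov.negex_l _ _ _ _ _ h
    · exact Prov.and_l _ _ _ _ h
    · exact Prov.or_l _ _ _ _ h.1 h.2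
    · exact Prov.imp_l _ _ _ _ h.1 h.2
    · exact Prov.all_l _ _ _ _ _ h
    · exact Prov.ex_l _ _ _ _ _ hΓ hΔ (hbound _ _ hyA) h

theorem red_syms {t : Term σ} (ht : t.syms ⊆ F) (y : ℕ) {b : Bool} {A : Formula σ}
    (hA : A.syms ⊆ F) : ∀ l ∈ red t y b A, ∀ p ∈ l, p.2.syms ⊆ F := by
  have hv : ∀ z : ℕ, (Term.var z : Term σ).syms ⊆ F := fun _ => by simp [Term.syms]
  rcases b with _ | _ <;>
    rcases A with _ | _ | (_ | _ | _ | _ | _ | _ | _ | _) | _ | _ | _ | _ | _ <;>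
      simp_all [red, Formula.syms, Formula.syms_subst1]

/-! ### Saturation -/

/-- The invariant of the construction: a finite unprovable sequent with function symbols in `F`. -/
structure Good (F : Set (Σ k, σ.Func k)) (s : Set (Bool × Formula σ)) : Prop where
  finite : s.Finite
  syms : ∀ p ∈ s, p.2.syms ⊆ F
  unprovable : ¬ Provable s

/-- Some premise given by `red` for the signed formula `p` and the term `t` is contained in `s`. -/
def Reduced (t : Term σ) (p : Bool × Formula σ) (s : Set (Bool × Formula σ)) : Prop :=
  ∃ y, ∃ l ∈ red t y p.1 p.2, ∀ q ∈ l, q ∈ s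

theorem mem_foldr_insert {τ : Type} (l : List τ) (s : Set τ) (p : τ) :
    p ∈ l.foldr insert s ↔ p ∈ l ∨ p ∈ s := by
  induction l with
  | nil => simp
  | cons a l ih => simp [ih, or_assoc]

theorem finite_foldr_insert {τ : Type} (l : List τ) {s : Set τ} (hs : s.Finite) :
    (l.foldr insert s).Finite := by
  induction l with
  | nil => exact hs
  | cons a l ih => exact ih.insert a

theorem exists_fresh {s : Set (Bool × Formula σ)} (hs : s.Finite) :
    ∃ y, ∀ p ∈ s, y ∉ p.2.fv :=
  ⟨freshVar (hs.toFinset.biUnion fun p => p.2.fv), fun p hp h =>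
    freshVar_notMem _ (Finset.mem_biUnion.2 ⟨p, hs.mem_toFinset.2 hp, h⟩)⟩

theorem Good.reduce_one {s : Set (Bool × Formula σ)} (hs : Good F s) {t : Term σ}
    (ht : t.syms ⊆ F) {p : Bool × Formula σ} (hp : p ∈ s) :
    ∃ s', s ⊆ s' ∧ Good F s' ∧ Reduced t p s' := by
  obtain ⟨y, hy⟩ := exists_fresh hs.finite
  by_contra! hcon
  refine hs.unprovable (provable_of_red (t := t) hy (b := p.1) (A := p.2) hp fun l hl => ?_)
  by_contra hu
  refine hcon (l.foldr insert s) (fun q hq => (mem_foldr_insert _ _ _).2 (Or.inr hq))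
    ⟨finite_foldr_insert l hs.finite, fun q hq => ?_, hu⟩
    ⟨y, l, hl, fun q hq => (mem_foldr_insert _ _ _).2 (Or.inl hq)⟩
  rcases (mem_foldr_insert _ _ _).1 hq with hq | hq
  · exact red_syms ht y (hs.syms p hp) l hl q hq
  · exact hs.syms q hq

theorem Good.reduce_list {t : Term σ} (ht : t.syms ⊆ F) (l : List (Bool × Formula σ)) :
    ∀ {s : Set (Bool × Formula σ)}, Good F s → (∀ p ∈ l, p ∈ s) →
      ∃ s', s ⊆ s' ∧ Good F s' ∧ ∀ p ∈ l, Reduced t p s' := by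
  induction l with
  | nil => exact fun {s} hs _ => ⟨s, subset_rfl, hs, by simp⟩
  | cons p l ih =>
    intro s hs hl
    obtain ⟨s', h1, h2, y, m, hm, hms⟩ := hs.reduce_one ht (hl p (by simp))
    obtain ⟨s'', h3, h4, h5⟩ := ih h2 fun q hq => h1 (hl q (by simp [hq]))
    refine ⟨s'', h1.trans h3, h4, fun q hq => ?_⟩
    rcases List.mem_cons.1 hq with rfl | hq
    · exact ⟨y, m, hm, fun r hr => h3 (hms r hr)⟩
    · exact h5 q hq

theorem eqF_syms {t : Term σ} (ht : t.syms ⊆ F) : (eqF t t).syms ⊆ F := by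
  simp only [eqF, Formula.syms, Set.iUnion_subset_iff]
  intro i
  fin_cases i <;> exact ht

theorem Good.step {s : Set (Bool × Formula σ)} (hs : Good F s) {t : Term σ} (ht : t.syms ⊆ F) :
    ∃ s', s ⊆ s' ∧ Good F s' ∧ (true, eqF t t) ∈ s' ∧ ∀ p ∈ s, Reduced t p s' := by
  have hgood : Good F (insert (true, eqF t t) s) := by
    refine ⟨hs.finite.insert _, ?_, fun h => hs.unprovable ?_⟩
    · rintro p (rfl | hp)
      · exact eqF_syms ht
      · exact hs.syms p hp
    · unfold Provable at h ⊢
      rw [left_insert_true, right_insert_true] at h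
      exact Prov.eq_refl t _ _ h
  obtain ⟨s', h1, h2, h3⟩ := hgood.reduce_list ht hs.finite.toFinset.toList
    fun p hp => Or.inr (by simpa using hp)
  exact ⟨s', (Set.subset_insert _ _).trans h1, h2, h1 (Or.inl rfl), fun p hp =>
    h3 p (by simpa using hp)⟩

/-- A Hintikka set over the function symbols `F`: a set of signed formulas, seen as a possibly
infinite sequent, that is saturated under `red` for all terms over `F` and is not an instance of the
initial sequent for literals. -/
structure Hintikka (F : Set (Σ k, σ.Func k)) (H : Set (Bool × Formula σ)) : Prop where
  syms : ∀ p ∈ H, p.2.syms ⊆ F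
  refl : ∀ t : Term σ, t.syms ⊆ F → (true, eqF t t) ∈ H
  lit : ∀ A : Formula σ, A.IsLiteral → (true, A) ∈ H → (false, A) ∉ H
  red : ∀ t : Term σ, t.syms ⊆ F → ∀ p ∈ H, Reduced t p H

theorem exists_hintikka (hF : F.Countable) {s : Set (Bool × Formula σ)} (hs : Good F s) :
    ∃ H, s ⊆ H ∧ Hintikka F H := by
  obtain ⟨e, he⟩ := (countable_terms hF).exists_eq_range ⟨.var 0, by simp [Term.syms]⟩
  have hesyms : ∀ n, (e n).syms ⊆ F := fun n => by
    have : e n ∈ {t : Term σ | t.syms ⊆ F} := he ▸ Set.mem_range_self n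
    exact this
  choose next hsub hgood hrefl hred using
    fun (n : ℕ) (s : {s : Set (Bool × Formula σ) // Good F s}) => s.2.step (hesyms n)
  -- Stage `n` uses the term `e n.unpair.1`, so every term is used at arbitrarily late stages.
  let f : ℕ → {s : Set (Bool × Formula σ) // Good F s} := fun n =>
    Nat.rec ⟨s, hs⟩ (fun n s => ⟨next n.unpair.1 s, hgood n.unpair.1 s⟩) n
  have hmono : Monotone fun n => (f n).1 := monotone_nat_of_le_succ fun n => hsub _ (f n)
  have hmem : ∀ {n m p}, n ≤ m → p ∈ (f n).1 → p ∈ (f m).1 := fun h hp => hmono h hp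
  refine ⟨⋃ n, (f n).1, Set.subset_iUnion (fun n => (f n).1) 0, ?_, ?_, ?_, ?_⟩
  · intro p hp
    obtain ⟨n, hn⟩ := Set.mem_iUnion.1 hp
    exact (f n).2.syms p hn
  · intro t ht
    obtain ⟨k, rfl⟩ : t ∈ Set.range e := he ▸ ht
    have h := hrefl (Nat.pair k 0).unpair.1 (f (Nat.pair k 0))
    rw [Nat.unpair_pair] at h
    refine Set.mem_iUnion.2 ⟨Nat.pair k 0 + 1, ?_⟩
    change _ ∈ next (Nat.pair k 0).unpair.1 (f (Nat.pair k 0))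
    rwa [Nat.unpair_pair]
  · intro A hA h1 h2
    obtain ⟨n, hn⟩ := Set.mem_iUnion.1 h1
    obtain ⟨m, hm⟩ := Set.mem_iUnion.1 h2
    refine (f (max n m)).2.unprovable ?_
    have hid := Prov.id A {B | (true, B) ∈ (f (max n m)).1} {B | (false, B) ∈ (f (max n m)).1} hA
    have hl : (true, A) ∈ (f (max n m)).1 := hmem (le_max_left n m) hn
    have hr : (false, A) ∈ (f (max n m)).1 := hmem (le_max_right n m) hm
    rwa [Set.insert_eq_of_mem (show A ∈ {B | (true, B) ∈ (f (max n m)).1} from hl),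
      Set.insert_eq_of_mem (show A ∈ {B | (false, B) ∈ (f (max n m)).1} from hr)] at hid
  · intro t ht p hp
    obtain ⟨k, rfl⟩ : t ∈ Set.range e := he ▸ ht
    obtain ⟨n, hn⟩ := Set.mem_iUnion.1 hp
    obtain ⟨y, l, hl, hlm⟩ := hred (Nat.pair k n).unpair.1 (f (Nat.pair k n)) p
      (hmem (Nat.right_le_pair k n) hn)
    rw [Nat.unpair_pair] at hl
    exact ⟨y, l, hl, fun q hq => Set.mem_iUnion.2 ⟨Nat.pair k n + 1, hlm q hq⟩⟩

/-! ### The term model of a Hintikka set -/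

open Classical in
/-- The truth value of an atomic formula `A` determined by the membership of `A` and `¬A` in the
left-hand side of `H`. -/
noncomputable def atomVal (H : Set (Bool × Formula σ)) (A : Formula σ) : V4 :=
  if (true, A) ∈ H then if (true, .neg A) ∈ H then .b else .t
  else if (true, .neg A) ∈ H then .f else .n

theorem atomVal_mem (H : Set (Bool × Formula σ)) (A : Formula σ) :
    atomVal H A ∈ Desig ↔ (true, A) ∈ H := by
  unfold atomVal
  split_ifs <;> simp_all [Desig]

theorem tnot_atomVal_mem (H : Set (Bool × Formula σ)) (A : Formula σ) :
    tnot (atomVal H A) ∈ Desig ↔ (true, .neg A) ∈ H := by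
  unfold atomVal
  split_ifs <;> simp_all [Desig, tnot]

open Classical in
/-- The structure of the terms over `F`. A function symbol that leads out of these terms gets the
constant value `var 0`. -/
noncomputable def termModel (H : Set (Bool × Formula σ)) (hH : Hintikka F H) : Struc σ where
  U := {t : Term σ // t.syms ⊆ F}
  uNonempty := ⟨⟨.var 0, by simp [Term.syms]⟩⟩
  funcI g ds :=
    if h : (Term.func g fun i => (ds i).1).syms ⊆ F then ⟨_, h⟩
    else ⟨.var 0, by simp [Term.syms]⟩
  predI P ds := atomVal H (.pred P fun i => (ds i).1)
  eqDesig d := by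
    rw [atomVal_mem]
    have : (fun i => ((![d, d] : Fin 2 → {t : Term σ // t.syms ⊆ F}) i).1) = ![d.1, d.1] := by
      funext i; fin_cases i <;> rfl
    rw [this]
    exact hH.refl d.1 d.2

/-- The assignment of each variable to itself. -/
def varAssign {H : Set (Bool × Formula σ)} (hH : Hintikka F H) : ℕ → (termModel H hH).U :=
  fun x => ⟨.var x, by simp [Term.syms]⟩

theorem termModel_term {H : Set (Bool × Formula σ)} (hH : Hintikka F H) (t : Term σ)
    (ht : t.syms ⊆ F) : t.val (termModel H hH) (varAssign hH) = ⟨t, ht⟩ := by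
  induction t with
  | var x => rfl
  | func g ts ih =>
    have hts : ∀ i, (ts i).syms ⊆ F := by
      simp only [Term.syms, Set.insert_subset_iff, Set.iUnion_subset_iff] at ht
      exact ht.2
    simp only [Term.val, fun i => ih i (hts i)]
    exact dif_pos ht

theorem termModel_pred {H : Set (Bool × Formula σ)} (hH : Hintikka F H) {k : ℕ} (P : σ.Pred k)
    (ts : Fin k → Term σ) (hts : (Formula.pred P ts).syms ⊆ F) :
    (Formula.pred P ts).val (termModel H hH) (varAssign hH) = atomVal H (.pred P ts) := by
  simp only [Formula.syms, Set.iUnion_subset_iff] at hts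
  simp only [Formula.val, fun i => termModel_term hH (ts i) (hts i)]
  rfl

/-- In the term model of `H`, the formulas on the left of `H` are designated and those on the right
are not. -/
theorem truth {H : Set (Bool × Formula σ)} (hH : Hintikka F H) (n : ℕ) :
    ∀ (b : Bool) (A : Formula σ), A.size < n → (b, A) ∈ H →
      (A.val (termModel H hH) (varAssign hH) ∈ Desig ↔ b = true) := by
  induction n with
  | zero => exact fun _ _ h => absurd h (Nat.not_lt_zero _)
  | succ n ih =>
    intro b A hsize hA
    have hsyms := hH.syms _ hA
    -- The instance of `B` by the term `d` of the domain has the value of `B` at `d`.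
    have hinst : ∀ (B : Formula σ) (x : ℕ) (d : (termModel H hH).U),
        (B.subst1 x d.1).val (termModel H hH) (varAssign hH) =
          B.val (termModel H hH) (Function.update (varAssign hH) x d) := fun B x d => by
      rw [Formula.val_subst1, termModel_term hH d.1 d.2]; rfl
    have ihT : ∀ B : Formula σ, B.size < n → (true, B) ∈ H →
        B.val (termModel H hH) (varAssign hH) ∈ Desig :=
      fun B h1 h2 => (ih true B h1 h2).2 rfl
    have ihF : ∀ B : Formula σ, B.size < n → (false, B) ∈ H →
        B.val (termModel H hH) (varAssign hH) ∉ Desig :=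
      fun B h1 h2 h3 => Bool.noConfusion ((ih false B h1 h2).1 h3)
    have ihnT : ∀ B : Formula σ, B.size + 1 < n → (true, B.neg) ∈ H →
        tnot (B.val (termModel H hH) (varAssign hH)) ∈ Desig :=
      fun B => ihT B.neg
    have ihnF : ∀ B : Formula σ, B.size + 1 < n → (false, B.neg) ∈ H →
        tnot (B.val (termModel H hH) (varAssign hH)) ∉ Desig :=
      fun B => ihF B.neg
    have hpred : ∀ {k : ℕ} (P : σ.Pred k) (ts : Fin k → Term σ), (Formula.pred P ts).syms ⊆ F →
        (termModel H hH).predI P (fun i => (ts i).val (termModel H hH) (varAssign hH)) =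
          atomVal H (.pred P ts) := fun P ts => termModel_pred hH P ts
    have hred := fun d : (termModel H hH).U => hH.red d.1 d.2 _ hA
    have hred0 := hred (varAssign hH 0)
    rcases b with _ | _ <;>
      rcases A with _ | _ | (_ | _ | _ | _ | _ | _ | _ | _) | _ | _ | _ | _ | _ <;>
      simp only [Reduced, BD.red, List.mem_cons, List.not_mem_nil, or_false, exists_eq_left,
        exists_eq_or_imp, forall_eq, forall_eq_or_imp, exists_const, false_and,
        Formula.size] at hred hred0 hsize <;>
      simp only [Formula.val, tand_mem, tor_mem, timp_mem, tnot_tnot, tnot_tand_mem,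
        tnot_tor_mem, tnot_timp_mem, tInf_mem, tSup_mem, tnot_tInf_mem, tnot_tSup_mem,
        Set.forall_mem_range, Set.exists_range_iff, ← hinst]
    · rw [hpred _ _ hsyms, atomVal_mem]
      simpa using fun h => hH.lit (.pred _ _) (Or.inl trivial) h hA
    · simp [Desig]
    · rw [hpred _ _ hsyms, tnot_atomVal_mem]
      simpa using fun h => hH.lit (.neg (.pred _ _)) (Or.inr ⟨.pred _ _, trivial, rfl⟩) h hA
    · have := ihF _ (by omega) hred0
      simpa using this
    · have h1 := ihnF _ (by omega) hred0.1
      have h2 := ihnF _ (by omega) hred0.2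
      simp [h1, h2]
    · have := hred0.imp (ihnF _ (by omega)) (ihnF _ (by omega))
      simp; tauto
    · have := hred0.imp (ihF _ (by omega)) (ihnF _ (by omega))
      simp; tauto
    · have := fun d => ihnF _ (by rw [Formula.size_subst1]; omega) (hred d)
      simpa using this
    · obtain ⟨y, hy⟩ := hred0
      have := ihnF _ (by rw [Formula.size_subst1]; omega) hy
      simpa using ⟨varAssign hH y, this⟩
    · have := hred0.imp (ihF _ (by omega)) (ihF _ (by omega))
      simp; tauto
    · have h1 := ihF _ (by omega) hred0.1
      have h2 := ihF _ (by omega) hred0.2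
      simp [h1, h2]
    · have h1 := ihT _ (by omega) hred0.1
      have h2 := ihF _ (by omega) hred0.2
      simp [h1, h2]
    · obtain ⟨y, hy⟩ := hred0
      have := ihF _ (by rw [Formula.size_subst1]; omega) hy
      simpa using ⟨varAssign hH y, this⟩
    · have := fun d => ihF _ (by rw [Formula.size_subst1]; omega) (hred d)
      simpa using this
    · rw [hpred _ _ hsyms, atomVal_mem]
      simpa using hA
    · rw [hpred _ _ hsyms, tnot_atomVal_mem]
      simpa using hA
    · simp [Desig, tnot]
    · simpa using ihT _ (by omega) hred0
    · simpa using hred0.imp (ihnT _ (by omega)) (ihnT _ (by omega))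
    · simpa using hred0.imp (ihnT _ (by omega)) (ihnT _ (by omega))
    · simpa using hred0.imp (ihT _ (by omega)) (ihnT _ (by omega))
    · obtain ⟨y, hy⟩ := hred0
      have := ihnT _ (by rw [Formula.size_subst1]; omega) hy
      simpa using ⟨varAssign hH y, this⟩
    · simpa using fun d => ihnT _ (by rw [Formula.size_subst1]; omega) (hred d)
    · simpa using hred0.imp (ihT _ (by omega)) (ihT _ (by omega))
    · simpa using hred0.imp (ihT _ (by omega)) (ihT _ (by omega))
    · simpa using fun hB => (hred0.imp (ihF _ (by omega)) (ihT _ (by omega))).resolve_left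
        (not_not_intro hB)
    · simpa using fun d => ihT _ (by rw [Formula.size_subst1]; omega) (hred d)
    · obtain ⟨y, hy⟩ := hred0
      have := ihT _ (by rw [Formula.size_subst1]; omega) hy
      simpa using ⟨varAssign hH y, this⟩

/-- A finite unprovable sequent has a countermodel. -/
theorem countermodel {s : Set (Bool × Formula σ)} (hs : s.Finite) (hu : ¬ Provable s) :
    ∃ (A : Struc σ) (α : ℕ → A.U), ∀ p ∈ s, (p.2.val A α ∈ Desig ↔ p.1 = true) := by
  have hF : (⋃ p ∈ s, p.2.syms).Countable :=
    hs.countable.biUnion fun p _ => p.2.countable_syms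
  obtain ⟨H, hsH, hH⟩ := exists_hintikka hF
    ⟨hs, fun p hp => Set.subset_biUnion_of_mem (u := fun p : Bool × Formula σ => p.2.syms) hp, hu⟩
  exact ⟨termModel H hH, varAssign hH, fun p hp =>
    truth hH (p.2.size + 1) p.1 p.2 (Nat.lt_succ_self _) (hsH hp)⟩

/-! ### Ultraproducts -/

section Ultraproduct

variable {I : Type} (𝒰 : Ultrafilter I)

theorem exists_ulim (h : I → V4) : ∃ v, ∀ᶠ i in 𝒰, h i = v := by
  by_contra! hcon
  have : ∀ᶠ i in 𝒰, ∀ v, h i ≠ v :=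
    Filter.eventually_all.2 hcon
  obtain ⟨i, hi⟩ := this.exists
  exact hi _ rfl

/-- The truth value that a family takes almost everywhere. -/
noncomputable def ulim (h : I → V4) : V4 := (exists_ulim 𝒰 h).choose

theorem ulim_spec (h : I → V4) : ∀ᶠ i in 𝒰, h i = ulim 𝒰 h := (exists_ulim 𝒰 h).choose_spec

variable {𝒰}

theorem ulim_eq {h : I → V4} {v : V4} (hv : ∀ᶠ i in 𝒰, h i = v) : ulim 𝒰 h = v := by
  obtain ⟨i, h1, h2⟩ := ((ulim_spec 𝒰 h).and hv).exists
  exact h1.symm.trans h2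

theorem ulim_mem {h : I → V4} {S : Set V4} : ulim 𝒰 h ∈ S ↔ ∀ᶠ i in 𝒰, h i ∈ S := by
  refine ⟨fun hS => (ulim_spec 𝒰 h).mono fun i hi => hi ▸ hS, fun hS => ?_⟩
  obtain ⟨i, h1, h2⟩ := ((ulim_spec 𝒰 h).and hS).exists
  exact h1 ▸ h2

/-- The limit values of a predicate on a product are the values that it takes in almost all
factors. -/
theorem eventually_range_eq {U : I → Type} [∀ i, Nonempty (U i)] (G : ∀ i, U i → V4) :
    ∀ᶠ i in 𝒰, Set.range (G i) = Set.range fun d : ∀ i, U i => ulim 𝒰 fun i => G i (d i) := by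
  have key : ∀ v, (v ∈ Set.range fun d : ∀ i, U i => ulim 𝒰 fun i => G i (d i)) ↔
      ∀ᶠ i in 𝒰, v ∈ Set.range (G i) := by
    intro v
    constructor
    · rintro ⟨d, rfl⟩
      exact (ulim_spec 𝒰 fun i => G i (d i)).mono fun i hi => ⟨d i, hi⟩
    · intro hv
      have : ∀ i, ∃ d, v ∈ Set.range (G i) → G i d = v := fun i => by
        by_cases h : v ∈ Set.range (G i)
        · exact h.imp fun d hd _ => hd
        · exact ⟨Classical.arbitrary _, fun h' => absurd h' h⟩
      choose d hd using this
      exact ⟨d, ulim_eq (hv.mono hd)⟩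
  have : ∀ᶠ i in 𝒰, ∀ v, v ∈ Set.range (G i) ↔
      v ∈ Set.range fun d : ∀ i, U i => ulim 𝒰 fun i => G i (d i) := by
    refine Filter.eventually_all.2 fun v => ?_
    by_cases hv : v ∈ Set.range fun d : ∀ i, U i => ulim 𝒰 fun i => G i (d i)
    · exact ((key v).1 hv).mono fun i hi => iff_of_true hi hv
    · exact (Ultrafilter.eventually_not.2 (mt (key v).2 hv)).mono fun i hi => iff_of_false hi hv
  exact this.mono fun i hi => Set.ext hi

variable (𝒰)

/-- The ultraproduct without passage to the quotient: the domain is the full product, and predicates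
are evaluated along the ultrafilter. It is a structure since `=` need not be the identity. -/
noncomputable def ultraproduct (M : I → Struc σ) : Struc σ where
  U := ∀ i, (M i).U
  uNonempty := ⟨fun i => (M i).uNonempty.some⟩
  funcI g ds := fun i => (M i).funcI g fun j => ds j i
  predI P ds := ulim 𝒰 fun i => (M i).predI P fun j => ds j i
  eqDesig d := by
    refine ulim_mem.2 (Filter.Eventually.of_forall fun i => ?_)
    have : (fun j => (![d, d] : Fin 2 → ∀ i, (M i).U) j i) = ![d i, d i] := by
      funext j; fin_cases j <;> rfl
    rw [this]
    exact (M i).eqDesig (d i)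

theorem ultraproduct_term (M : I → Struc σ) (α : ℕ → (ultraproduct 𝒰 M).U) (t : Term σ) (i : I) :
    t.val (ultraproduct 𝒰 M) α i = t.val (M i) fun x => α x i := by
  induction t with
  | var x => rfl
  | func g ts ih =>
    simp only [Term.val, ← ih]
    rfl

theorem update_apply_index (M : I → Struc σ) (α : ℕ → (ultraproduct 𝒰 M).U) (x : ℕ)
    (d : (ultraproduct 𝒰 M).U) (i : I) :
    (fun z => Function.update α x d z i) = Function.update (fun z => α z i) x (d i) := by
  funext z
  by_cases h : z = x
  · subst h; simp
  · simp [h]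

/-- Łoś's theorem: the value of a formula in the ultraproduct is its value in almost all factors. -/
theorem los (M : I → Struc σ) (B : Formula σ) (α : ℕ → (ultraproduct 𝒰 M).U) :
    ∀ᶠ i in 𝒰, B.val (M i) (fun x => α x i) = B.val (ultraproduct 𝒰 M) α := by
  induction B generalizing α with
  | pred P ts =>
    simp only [Formula.val, ← ultraproduct_term]
    exact ulim_spec 𝒰 _
  | fls => exact Filter.Eventually.of_forall fun _ => rfl
  | neg B ih => exact (ih α).mono fun i h => congrArg tnot h
  | conj B C ihB ihC | disj B C ihB ihC | imp B C ihB ihC =>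
    filter_upwards [ihB α, ihC α] with i h1 h2
    simp only [Formula.val, h1, h2]
  | all x B ih | ex x B ih =>
    have := fun i => (M i).uNonempty
    filter_upwards [eventually_range_eq (𝒰 := 𝒰) fun i (d : (M i).U) =>
      B.val (M i) (Function.update (fun z => α z i) x d)] with i hi
    simp only [Formula.val, hi]
    congr 2
    funext d
    refine ulim_eq ?_
    filter_upwards [ih (Function.update α x d)] with i h
    exact (congrArg (fun β => B.val (M i) β) (update_apply_index 𝒰 M α x d i)).symm.trans h

end Ultraproduct

/-! ### Completeness -/

/-- completeness of the sequent calculus of BD⊃,F. -/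
theorem completeness (σ : Signature) (Γ Δ : Set (Formula σ)) :
    Conseq Γ Δ → Derives Γ Δ := by
  intro hcons
  by_contra hder
  -- The signed formulas of `Γ ⇒ Δ`; its finite parts are indexed by arbitrary finite sets.
  let S : Set (Bool × Formula σ) := {p | if p.1 then p.2 ∈ Γ else p.2 ∈ Δ}
  have hmodel : ∀ i : Finset (Bool × Formula σ), ∃ (A : Struc σ) (α : ℕ → A.U),
      ∀ p ∈ (i : Set (Bool × Formula σ)) ∩ S, (p.2.val A α ∈ Desig ↔ p.1 = true) := by
    intro i
    have hfin : ((i : Set (Bool × Formula σ)) ∩ S).Finite := i.finite_toSet.inter_of_left S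
    refine countermodel hfin fun h => hder ⟨_, _, ?_, ?_, ?_, ?_, h⟩
    · exact fun A hA => by simpa [S] using hA.2
    · exact fun A hA => by simpa [S] using hA.2
    · exact hfin.preimage (Prod.mk_right_injective true).injOn
    · exact hfin.preimage (Prod.mk_right_injective false).injOn
  choose M α hM using hmodel
  let 𝒰 : Ultrafilter (Finset (Bool × Formula σ)) := Ultrafilter.of Filter.atTop
  have hval : ∀ p ∈ S, (p.2.val (ultraproduct 𝒰 M) (fun x i => α i x) ∈ Desig ↔ p.1 = true) := by
    intro p hp
    have h1 : ∀ᶠ i in (𝒰 : Filter (Finset (Bool × Formula σ))), {p} ≤ i :=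
      (Filter.eventually_ge_atTop {p}).filter_mono (Ultrafilter.of_le Filter.atTop)
    obtain ⟨i, h2, h3⟩ := (h1.and (los 𝒰 M p.2 fun x i => α i x)).exists
    rw [← h3]
    exact hM i p ⟨by simpa using h2, hp⟩
  obtain ⟨C, hC, hCd⟩ := hcons (ultraproduct 𝒰 M) (fun x i => α i x) fun B hB =>
    (hval (true, B) (by simpa [S] using hB)).2 rfl
  exact Bool.noConfusion ((hval (false, C) (by simpa [S] using hC)).1 hCd)

end BD
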